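/- Let V_1, …, V_n be H-modules, each finite-dimensional over F and indecomposable, and suppose every indecomposable H-module that is finite-dimensional over F is isomorphic to some V_i. Then for all m, s : Fin n → ℕ and every H-linear map f : V^(s) → V^(m), there exist t : Fin n → ℕ, a surjective H-linear map h : V^(s) → V^(t), and an injective H-linear map g : V^(t) → V^(m) such that f = g ∘ h. -/

import Mathlib

/-- An `H`-module `M` is indecomposable if it is nonzero and whenever `p` and `q` are
complementary submodules, one of them is trivial. -/
def IsIndecomposableModule (H : Type*) [Ring H] (M : Type*) [AddCommGroup M]
    [Module H M] : Prop :=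
  (∃ x : M, x ≠ 0) ∧
    ∀ p q : Submodule H M, p ⊓ q = ⊥ → p ⊔ q = ⊤ → p = ⊥ ∨ q = ⊥

/-- A finite-dimensional module is isomorphic to a finite product of members of a family which
contains all finite-dimensional indecomposable modules up to isomorphism. -/
theorem exists_linearEquiv_pi_of_indecomposables.{u} (F : Type*) [Field F] {H : Type*} [Ring H]
    [Algebra F H] {I : Type*} (V : I → Type u)
    [∀ i, AddCommGroup (V i)] [∀ i, Module H (V i)]
    (hall : ∀ (W : Type u) [AddCommGroup W] [Module H W] [Module F W]
      [IsScalarTower F H W] [FiniteDimensional F W],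
      IsIndecomposableModule H W → ∃ i : I, Nonempty (W ≃ₗ[H] V i))
    (W : Type u) [AddCommGroup W] [Module H W] [Module F W] [IsScalarTower F H W]
    [FiniteDimensional F W] :
    ∃ (J : Type) (_ : Fintype J) (c : J → I), Nonempty (W ≃ₗ[H] ∀ j, V (c j)) := by
  induction hd : Module.finrank F W using Nat.strong_induction_on generalizing W with
  | _ d ih =>
    by_cases hW : IsIndecomposableModule H W
    · obtain ⟨i, ⟨e⟩⟩ := hall W hW
      exact ⟨Unit, inferInstance, fun _ => i, ⟨e.trans (LinearEquiv.funUnique Unit H (V i)).symm⟩⟩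
    rcases subsingleton_or_nontrivial W with hsub | hnt
    · exact ⟨Empty, inferInstance, Empty.elim, ⟨LinearEquiv.ofSubsingleton _ _⟩⟩
    obtain ⟨p, q, hinf, hsup, hp, hq⟩ : ∃ p q : Submodule H W,
        p ⊓ q = ⊥ ∧ p ⊔ q = ⊤ ∧ p ≠ ⊥ ∧ q ≠ ⊥ := by
      by_contra! hcon
      exact hW ⟨exists_ne 0, fun p q h₁ h₂ => or_iff_not_imp_left.2 (hcon p q h₁ h₂)⟩
    have hc : IsCompl p q := ⟨disjoint_iff.2 hinf, codisjoint_iff.2 hsup⟩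
    have hfp : FiniteDimensional F p :=
      inferInstanceAs (FiniteDimensional F (p.restrictScalars F))
    have hfq : FiniteDimensional F q :=
      inferInstanceAs (FiniteDimensional F (q.restrictScalars F))
    let e := Submodule.prodEquivOfIsCompl p q hc
    have hsum : Module.finrank F p + Module.finrank F q = d := by
      rw [← hd, ← Module.finrank_prod, (e.restrictScalars F).finrank_eq]
    have := Submodule.nontrivial_iff_ne_bot.2 hp
    have := Submodule.nontrivial_iff_ne_bot.2 hq
    have hp_pos : 0 < Module.finrank F p := Module.finrank_pos
    have hq_pos : 0 < Module.finrank F q := Module.finrank_pos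
    obtain ⟨J, _, a, ⟨ea⟩⟩ := ih _ (by omega) p rfl
    obtain ⟨K, _, b, ⟨eb⟩⟩ := ih _ (by omega) q rfl
    exact ⟨J ⊕ K, inferInstance, Sum.elim a b,
      ⟨e.symm.trans ((ea.prodCongr eb).trans
        (LinearEquiv.sumPiEquivProdPi H J K fun j => V (Sum.elim a b j)).symm)⟩⟩

/-- A finite-dimensional module is isomorphic to a direct sum with multiplicities of members of a
finite family which contains all finite-dimensional indecomposable modules up to isomorphism. -/
theorem exists_linearEquiv_directSum.{u} (F : Type*) [Field F] {H : Type*} [Ring H]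
    [Algebra F H] {n : ℕ} (V : Fin n → Type u)
    [∀ i, AddCommGroup (V i)] [∀ i, Module H (V i)]
    (hall : ∀ (W : Type u) [AddCommGroup W] [Module H W] [Module F W]
      [IsScalarTower F H W] [FiniteDimensional F W],
      IsIndecomposableModule H W → ∃ i : Fin n, Nonempty (W ≃ₗ[H] V i))
    (W : Type u) [AddCommGroup W] [Module H W] [Module F W] [IsScalarTower F H W]
    [FiniteDimensional F W] :
    ∃ t : Fin n → ℕ,
      Nonempty (W ≃ₗ[H] DirectSum (Σ i : Fin n, Fin (t i)) fun p => V p.1) := by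
  obtain ⟨J, _, c, ⟨e⟩⟩ := exists_linearEquiv_pi_of_indecomposables F V hall W
  let t : Fin n → ℕ := fun i => Fintype.card {j // c j = i}
  let r : J ≃ Σ i : Fin n, Fin (t i) :=
    (Equiv.sigmaFiberEquiv c).symm.trans
      (Equiv.sigmaCongrRight fun i => Fintype.equivFin {j // c j = i})
  let U : (Σ i : Fin n, Fin (t i)) → Type u := fun p => V p.1
  exact ⟨t, ⟨e.trans ((LinearEquiv.piCongrLeft H U r).trans
    (DirectSum.linearEquivFunOnFintype H _ U).symm)⟩⟩

theorem stmt11.{u} (F : Type*) [Field F] (H : Type*) [Ring H] [Algebra F H]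
    (n : ℕ) (V : Fin n → Type u)
    [∀ i, AddCommGroup (V i)] [∀ i, Module H (V i)]
    [∀ i, Module F (V i)] [∀ i, IsScalarTower F H (V i)]
    [∀ i, FiniteDimensional F (V i)]
    (hind : ∀ i, IsIndecomposableModule H (V i))
    (hall : ∀ (W : Type u) [AddCommGroup W] [Module H W] [Module F W]
      [IsScalarTower F H W] [FiniteDimensional F W],
      IsIndecomposableModule H W → ∃ i : Fin n, Nonempty (W ≃ₗ[H] V i))
    (m s : Fin n → ℕ)
    (f : (DirectSum (Σ i : Fin n, Fin (s i)) fun p => V p.1) →ₗ[H]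
      (DirectSum (Σ i : Fin n, Fin (m i)) fun p => V p.1)) :
    ∃ (t : Fin n → ℕ)
      (h : (DirectSum (Σ i : Fin n, Fin (s i)) fun p => V p.1) →ₗ[H]
        (DirectSum (Σ i : Fin n, Fin (t i)) fun p => V p.1))
      (g : (DirectSum (Σ i : Fin n, Fin (t i)) fun p => V p.1) →ₗ[H]
        (DirectSum (Σ i : Fin n, Fin (m i)) fun p => V p.1)),
      Function.Surjective h ∧ Function.Injective g ∧ f = g.comp h := by
  let e := DirectSum.linearEquivFunOnFintype H (Σ i : Fin n, Fin (s i)) fun p => V p.1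
  let k := f.comp e.symm.toLinearMap
  have : FiniteDimensional F (LinearMap.range k) :=
    Module.Finite.of_surjective (k.rangeRestrict.restrictScalars F)
      k.surjective_rangeRestrict
  obtain ⟨t, ⟨d⟩⟩ := exists_linearEquiv_directSum F V hall (LinearMap.range k)
  refine ⟨t, d.toLinearMap ∘ₗ k.rangeRestrict ∘ₗ e.toLinearMap,
    (LinearMap.range k).subtype ∘ₗ d.symm.toLinearMap, ?_, ?_, ?_⟩
  · exact d.surjective.comp (k.surjective_rangeRestrict.comp e.surjective)
  · exact (LinearMap.range k).injective_subtype.comp d.symm.injective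
  · refine LinearMap.ext fun x => ?_
    simp [k]
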